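/- arXiv:2306.07018 — 6 statements merged into one kernel-verified Lean document; each statement's English description precedes it below -/
import Mathlib

section
/- (Lower bound on the LAFTE under bounded response) Under Independence, Relevance, Monotonicity, the Double exclusion restriction, and the bounded response condition that for all d1,d2 ∈ {0,1} the potential outcome satisfies Ymin ≤ Y(d1,d2) ≤ Ymax almost surely (for real constants Ymin ≤ Ymax), it holds that [ΔE[(1−D1−D2+2·D1·D2)·Y|Z] + Ymin·ΔE[D∨−D2|Z] − Ymax·ΔE[D∧−D2|Z]] / ΔE[D1|Z] ≤ E[Y(1,1)−Y(0,0) | C], where C := {C1,C2} ∪ {C1,N2} ∪ {C1,A2} satisfies μ(C) = ΔE[D1|Z] > 0. (Corollary 3, lower bound) -/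
open MeasureTheory ProbabilityTheory

noncomputable section

variable {Ω : Type*} [MeasurableSpace Ω]

/-- Observed first-part treatment: `D1 = D1(1)·Z + D1(0)·(1−Z)`. -/
def obsD1 (Z : Ω → ℝ) (D1 : Bool → Ω → ℝ) (ω : Ω) : ℝ :=
  D1 true ω * Z ω + D1 false ω * (1 - Z ω)

/-- Observed second-part treatment. -/
def obsD2 (Z : Ω → ℝ) (D1 : Bool → Ω → ℝ) (D2 : Bool → Bool → Ω → ℝ) (ω : Ω) : ℝ :=
  (D2 true true ω * obsD1 Z D1 ω + D2 true false ω * (1 - obsD1 Z D1 ω)) * Z ω +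
  (D2 false true ω * obsD1 Z D1 ω + D2 false false ω * (1 - obsD1 Z D1 ω)) * (1 - Z ω)

/-- Summary treatment `D∧ = D1·D2`. -/
def obsDand (Z : Ω → ℝ) (D1 : Bool → Ω → ℝ) (D2 : Bool → Bool → Ω → ℝ) (ω : Ω) : ℝ :=
  obsD1 Z D1 ω * obsD2 Z D1 D2 ω

/-- Summary treatment `D∨ = D1 + D2 − D1·D2`. -/
def obsDor (Z : Ω → ℝ) (D1 : Bool → Ω → ℝ) (D2 : Bool → Bool → Ω → ℝ) (ω : Ω) : ℝ :=
  obsD1 Z D1 ω + obsD2 Z D1 D2 ω - obsD1 Z D1 ω * obsD2 Z D1 D2 ω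

/-- Observed outcome `Y = Σ_{d1,d2} Y(Z,d1,d2)·1{D1=d1, D2=d2}`, written out using that the
observed treatments and the instrument are {0,1}-valued. The first index of `Yp` is `z`, the
second is `d1`, the third is `d2`. -/
def obsY (Z : Ω → ℝ) (D1 : Bool → Ω → ℝ) (D2 : Bool → Bool → Ω → ℝ)
    (Yp : Bool → Bool → Bool → Ω → ℝ) (ω : Ω) : ℝ :=
  (Yp true true true ω * obsD1 Z D1 ω * obsD2 Z D1 D2 ω +
   Yp true false true ω * (1 - obsD1 Z D1 ω) * obsD2 Z D1 D2 ω +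
   Yp true true false ω * obsD1 Z D1 ω * (1 - obsD2 Z D1 D2 ω) +
   Yp true false false ω * (1 - obsD1 Z D1 ω) * (1 - obsD2 Z D1 D2 ω)) * Z ω +
  (Yp false true true ω * obsD1 Z D1 ω * obsD2 Z D1 D2 ω +
   Yp false false true ω * (1 - obsD1 Z D1 ω) * obsD2 Z D1 D2 ω +
   Yp false true false ω * obsD1 Z D1 ω * (1 - obsD2 Z D1 D2 ω) +
   Yp false false false ω * (1 - obsD1 Z D1 ω) * (1 - obsD2 Z D1 D2 ω)) * (1 - Z ω)

/-- `ΔE[A|Z] := E[A | Z = 1] − E[A | Z = 0]`, expectations under conditional measures. -/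
def dE (μ : Measure Ω) (Z A : Ω → ℝ) : ℝ :=
  (∫ ω, A ω ∂(μ[|Z ⁻¹' {1}])) - (∫ ω, A ω ∂(μ[|Z ⁻¹' {0}]))

/-- The full-complier event `{C1,C2}`. -/
def CCev (D1 : Bool → Ω → ℝ) (D2 : Bool → Bool → Ω → ℝ) : Set Ω :=
  {ω | D1 true ω - D1 false ω = 1 ∧ D2 true true ω - D2 false false ω = 1}

/-- The mover event `{C1,N2}`. -/
def CNev (D1 : Bool → Ω → ℝ) (D2 : Bool → Bool → Ω → ℝ) : Set Ω :=
  {ω | D1 true ω - D1 false ω = 1 ∧ D2 true true ω = 0 ∧ D2 false false ω = 0}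

/-- The mover event `{C1,A2}`. -/
def CAev (D1 : Bool → Ω → ℝ) (D2 : Bool → Bool → Ω → ℝ) : Set Ω :=
  {ω | D1 true ω - D1 false ω = 1 ∧ D2 true true ω = 1 ∧ D2 false false ω = 1}

/-- The mover event `{N1,C2}`. -/
def NCev (D1 : Bool → Ω → ℝ) (D2 : Bool → Bool → Ω → ℝ) : Set Ω :=
  {ω | D1 true ω = 0 ∧ D1 false ω = 0 ∧ D2 true false ω - D2 false false ω = 1}

/-- The mover event `{A1,C2}`. -/
def ACev (D1 : Bool → Ω → ℝ) (D2 : Bool → Bool → Ω → ℝ) : Set Ω :=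
  {ω | D1 true ω = 1 ∧ D1 false ω = 1 ∧ D2 true true ω - D2 false true ω = 1}



theorem aux_cond {E : Type*} [MeasurableSpace E] (μ : Measure Ω) [IsProbabilityMeasure μ]
    (Z : Ω → ℝ) (V : Ω → E) (hZ : Measurable Z) (hV : Measurable V) (h : IndepFun V Z μ)
    (z : ℝ) (hz : μ (Z ⁻¹' {z}) ≠ 0) (g : E → ℝ) (hg : Measurable g) (A : Ω → ℝ)
    (hA : ∀ ω, Z ω = z → A ω = g (V ω)) :
    ∫ ω, A ω ∂(μ[|Z ⁻¹' {z}]) = ∫ ω, g (V ω) ∂μ := by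
  have hs : MeasurableSet (Z ⁻¹' {z}) := hZ (measurableSet_singleton z)
  have hk : Measurable (Set.indicator ({z} : Set ℝ) (fun _ => (1 : ℝ))) :=
    measurable_const.indicator (measurableSet_singleton z)
  have h1 := (h.comp hg hk).integral_mul_eq_mul_integral
    (hg.comp hV).aestronglyMeasurable (hk.comp hZ).aestronglyMeasurable
  have h2 : ∫ ω, A ω ∂(μ.restrict (Z ⁻¹' {z})) =
      ∫ ω, ((g ∘ V) * (Set.indicator ({z} : Set ℝ) (fun _ => (1 : ℝ)) ∘ Z)) ω ∂μ := by
    rw [← integral_indicator hs]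
    congr 1
    ext ω
    by_cases hω : Z ω = z
    · simp [Set.indicator, hω, hA ω hω]
    · simp [Set.indicator, hω]
  have h3 : ∫ ω, (Set.indicator ({z} : Set ℝ) (fun _ => (1 : ℝ)) ∘ Z) ω ∂μ
      = (μ (Z ⁻¹' {z})).toReal := by
    have : (Set.indicator ({z} : Set ℝ) (fun _ => (1 : ℝ)) ∘ Z)
        = (Z ⁻¹' {z}).indicator (fun _ => (1 : ℝ)) := by
      ext ω; by_cases hω : Z ω = z <;> simp [hω]
    rw [this, integral_indicator hs]
    simp [Measure.real]
  have h4 : (μ (Z ⁻¹' {z})).toReal ≠ 0 :=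
    ENNReal.toReal_ne_zero.2 ⟨hz, measure_ne_top _ _⟩
  rw [ProbabilityTheory.cond, integral_smul_measure, h2, h1, h3, ENNReal.toReal_inv, smul_eq_mul]
  simp only [Function.comp]
  field_simp

theorem aux_dE {E : Type*} [MeasurableSpace E] (μ : Measure Ω) [IsProbabilityMeasure μ]
    (Z : Ω → ℝ) (V : Ω → E) (hZ : Measurable Z) (hV : Measurable V) (h : IndepFun V Z μ)
    (hz1 : μ (Z ⁻¹' {1}) ≠ 0) (hz0 : μ (Z ⁻¹' {0}) ≠ 0)
    (g1 g0 : E → ℝ) (hg1 : Measurable g1) (hg0 : Measurable g0) (A : Ω → ℝ)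
    (hA1 : ∀ ω, Z ω = 1 → A ω = g1 (V ω)) (hA0 : ∀ ω, Z ω = 0 → A ω = g0 (V ω)) :
    dE μ Z A = (∫ ω, g1 (V ω) ∂μ) - ∫ ω, g0 (V ω) ∂μ := by
  rw [dE, aux_cond μ Z V hZ hV h 1 hz1 g1 hg1 A hA1, aux_cond μ Z V hZ hV h 0 hz0 g0 hg0 A hA0]

theorem aux_comb (μ : Measure Ω) {f1 f0 g1 g0 h1 h0 R : Ω → ℝ}
    (if1 : Integrable f1 μ) (if0 : Integrable f0 μ) (ig1 : Integrable g1 μ)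
    (ig0 : Integrable g0 μ) (ih1 : Integrable h1 μ) (ih0 : Integrable h0 μ)
    (iR : Integrable R μ) (a b : ℝ)
    (h : ∀ᵐ ω ∂μ, (f1 ω - f0 ω) + a * (g1 ω - g0 ω) - b * (h1 ω - h0 ω) ≤ R ω) :
    ((∫ ω, f1 ω ∂μ) - ∫ ω, f0 ω ∂μ) + a * ((∫ ω, g1 ω ∂μ) - ∫ ω, g0 ω ∂μ)
      - b * ((∫ ω, h1 ω ∂μ) - ∫ ω, h0 ω ∂μ) ≤ ∫ ω, R ω ∂μ := by
  have i1 : Integrable (fun ω => f1 ω - f0 ω) μ := if1.sub if0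
  have i2 : Integrable (fun ω => a * (g1 ω - g0 ω)) μ := (ig1.sub ig0).const_mul a
  have i3 : Integrable (fun ω => b * (h1 ω - h0 ω)) μ := (ih1.sub ih0).const_mul b
  have i12 : Integrable (fun ω => (f1 ω - f0 ω) + a * (g1 ω - g0 ω)) μ := i1.add i2
  rw [← integral_sub if1 if0, ← integral_sub ig1 ig0, ← integral_sub ih1 ih0,
    ← integral_const_mul, ← integral_const_mul, ← integral_add i1 i2, ← integral_sub i12 i3]
  exact integral_mono_ae (i12.sub i3) iR h

theorem stmt_13
    (μ : Measure Ω) [IsProbabilityMeasure μ]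
    (Z : Ω → ℝ) (D1 : Bool → Ω → ℝ) (D2 : Bool → Bool → Ω → ℝ)
    (Yp : Bool → Bool → Bool → Ω → ℝ)
    (hZmeas : Measurable Z)
    (hD1meas : ∀ b, Measurable (D1 b))
    (hD2meas : ∀ b b', Measurable (D2 b b'))
    (hYmeas : ∀ z d1 d2, Measurable (Yp z d1 d2))
    (hYint : ∀ z d1 d2, Integrable (Yp z d1 d2) μ)
    (hZ01 : ∀ ω, Z ω = 0 ∨ Z ω = 1)
    (hZpos : 0 < μ (Z ⁻¹' {1})) (hZlt : μ (Z ⁻¹' {1}) < 1)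
    (hD101 : ∀ b ω, D1 b ω = 0 ∨ D1 b ω = 1)
    (hD201 : ∀ b b' ω, D2 b b' ω = 0 ∨ D2 b b' ω = 1)
    (hindep : IndepFun
      (fun ω => ((fun b => D1 b ω), (fun b b' => D2 b b' ω), (fun z d1 d2 => Yp z d1 d2 ω))) Z μ)
    (hrel1 : 0 < dE μ Z (obsD1 Z D1))
    (hrel2 : 0 < dE μ Z (obsD2 Z D1 D2))
    (hrelAnd : 0 < dE μ Z (obsDand Z D1 D2))
    (hrelOr : 0 < dE μ Z (obsDor Z D1 D2))
    (hmono1 : ∀ᵐ ω ∂μ, D1 false ω ≤ D1 true ω)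
    (hmono2 : ∀ᵐ ω ∂μ,
      D2 false true ω * D1 false ω + D2 false false ω * (1 - D1 false ω) ≤
        D2 true true ω * D1 true ω + D2 true false ω * (1 - D1 true ω))
    (hexcl : ∀ d1 d2, ∀ᵐ ω ∂μ, Yp true d1 d2 ω = Yp false d1 d2 ω)
    (hdexcl : ∀ d1, ∀ᵐ ω ∂μ, D2 true d1 ω = D2 false d1 ω)
    (Ymin Ymax : ℝ) (hYlohi : Ymin ≤ Ymax)
    (hbound : ∀ z d1 d2, ∀ᵐ ω ∂μ, Ymin ≤ Yp z d1 d2 ω ∧ Yp z d1 d2 ω ≤ Ymax) :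
    (μ (CCev D1 D2 ∪ CNev D1 D2 ∪ CAev D1 D2)).toReal = dE μ Z (obsD1 Z D1) ∧
    (dE μ Z (fun ω =>
        (1 - obsD1 Z D1 ω - obsD2 Z D1 D2 ω + 2 * obsD1 Z D1 ω * obsD2 Z D1 D2 ω) *
          obsY Z D1 D2 Yp ω) +
        Ymin * dE μ Z (fun ω => obsDor Z D1 D2 ω - obsD2 Z D1 D2 ω) -
        Ymax * dE μ Z (fun ω => obsDand Z D1 D2 ω - obsD2 Z D1 D2 ω)) / dE μ Z (obsD1 Z D1) ≤
      (∫ ω in CCev D1 D2 ∪ CNev D1 D2 ∪ CAev D1 D2, (Yp true true true ω - Yp true false false ω) ∂μ) /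
        (μ (CCev D1 D2 ∪ CNev D1 D2 ∪ CAev D1 D2)).toReal := by
  classical
  have hV : Measurable (fun ω => ((fun b => D1 b ω), (fun b b' => D2 b b' ω),
      (fun z d1 d2 => Yp z d1 d2 ω)) :
      Ω → (Bool → ℝ) × (Bool → Bool → ℝ) × (Bool → Bool → Bool → ℝ)) := by
    fun_prop
  have hz1 : μ (Z ⁻¹' {1}) ≠ 0 := hZpos.ne'
  have hz0 : μ (Z ⁻¹' {0}) ≠ 0 := by
    intro h0
    have hc : (Z ⁻¹' {1})ᶜ = Z ⁻¹' {0} := by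
      ext ω
      rcases hZ01 ω with h | h <;> simp [h]
    have := prob_add_prob_compl (μ := μ) (hZmeas (measurableSet_singleton (1 : ℝ)))
    rw [hc, h0, add_zero] at this
    exact hZlt.ne this
  let p1 : Bool → (Bool → ℝ) × (Bool → Bool → ℝ) × (Bool → Bool → Bool → ℝ) → ℝ := fun b v => v.1 b
  let p2 : Bool → Bool → (Bool → ℝ) × (Bool → Bool → ℝ) × (Bool → Bool → Bool → ℝ) → ℝ := fun b b' v => v.2.1 b b'
  let p3 : Bool → Bool → Bool → (Bool → ℝ) × (Bool → Bool → ℝ) × (Bool → Bool → Bool → ℝ) → ℝ := fun z d1 d2 v => v.2.2 z d1 d2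
  have m1 : ∀ z : ℝ, Measurable (obsD1 (fun _ => z) p1) := by
    intro z; simp only [p1]; unfold obsD1; fun_prop
  have m2 : ∀ z : ℝ, Measurable (obsD2 (fun _ => z) p1 p2) := by
    intro z; simp only [p1, p2]; unfold obsD2 obsD1; fun_prop
  have mY : ∀ z : ℝ, Measurable (obsY (fun _ => z) p1 p2 p3) := by
    intro z
    have := m1 z
    have := m2 z
    unfold obsY; fun_prop
  have e1 := aux_dE μ Z _ hZmeas hV hindep hz1 hz0 (obsD1 (fun _ => 1) p1)
    (obsD1 (fun _ => 0) p1) (m1 1) (m1 0) (obsD1 Z D1)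
    (fun ω h => by simp [obsD1, h, p1]) (fun ω h => by simp [obsD1, h, p1])
  have e2 := aux_dE μ Z _ hZmeas hV hindep hz1 hz0
    (fun v => obsDor (fun _ => 1) p1 p2 v - obsD2 (fun _ => 1) p1 p2 v)
    (fun v => obsDor (fun _ => 0) p1 p2 v - obsD2 (fun _ => 0) p1 p2 v)
    (by have := m1 1; have := m2 1; unfold obsDor; fun_prop)
    (by have := m1 0; have := m2 0; unfold obsDor; fun_prop)
    (fun ω => obsDor Z D1 D2 ω - obsD2 Z D1 D2 ω)
    (fun ω h => by simp [obsDor, obsD1, obsD2, h, p1, p2])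
    (fun ω h => by simp [obsDor, obsD1, obsD2, h, p1, p2])
  have e3 := aux_dE μ Z _ hZmeas hV hindep hz1 hz0
    (fun v => obsDand (fun _ => 1) p1 p2 v - obsD2 (fun _ => 1) p1 p2 v)
    (fun v => obsDand (fun _ => 0) p1 p2 v - obsD2 (fun _ => 0) p1 p2 v)
    (by have := m1 1; have := m2 1; unfold obsDand; fun_prop)
    (by have := m1 0; have := m2 0; unfold obsDand; fun_prop)
    (fun ω => obsDand Z D1 D2 ω - obsD2 Z D1 D2 ω)
    (fun ω h => by simp [obsDand, obsD1, obsD2, h, p1, p2])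
    (fun ω h => by simp [obsDand, obsD1, obsD2, h, p1, p2])
  have mW : ∀ z : ℝ, Measurable (fun v => (1 - obsD1 (fun _ => z) p1 v - obsD2 (fun _ => z) p1 p2 v
      + 2 * obsD1 (fun _ => z) p1 v * obsD2 (fun _ => z) p1 p2 v) *
          obsY (fun _ => z) p1 p2 p3 v) := by
    intro z
    have := m1 z
    have := m2 z
    have := mY z
    fun_prop
  have e4 := aux_dE μ Z _ hZmeas hV hindep hz1 hz0 _ _ (mW 1) (mW 0)
    (fun ω => (1 - obsD1 Z D1 ω - obsD2 Z D1 D2 ω + 2 * obsD1 Z D1 ω * obsD2 Z D1 D2 ω) *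
          obsY Z D1 D2 Yp ω)
    (fun ω h => by simp [obsY, obsD1, obsD2, h, p1, p2, p3])
    (fun ω h => by simp [obsY, obsD1, obsD2, h, p1, p2, p3])
  generalize dE μ Z (fun ω => obsDor Z D1 D2 ω - obsD2 Z D1 D2 ω) = q2 at e2 ⊢
  generalize dE μ Z (fun ω => obsDand Z D1 D2 ω - obsD2 Z D1 D2 ω) = q3 at e3 ⊢
  generalize dE μ Z (fun ω => (1 - obsD1 Z D1 ω - obsD2 Z D1 D2 ω +
    2 * obsD1 Z D1 ω * obsD2 Z D1 D2 ω) * obsY Z D1 D2 Yp ω) = q4 at e4 ⊢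
  simp only [obsY, obsDor, obsDand, obsD1, obsD2, p1, p2, p3, mul_one, mul_zero, sub_self, add_zero,
    zero_add, sub_zero] at e1 e2 e3 e4
  have b1 : ∀ b, Integrable (D1 b) μ := fun b => by
    refine Integrable.of_bound (hD1meas b).aestronglyMeasurable 1 (ae_of_all _ fun ω => ?_)
    rcases hD101 b ω with h | h <;> simp [h]
  have b2 : ∀ b, Integrable (fun ω =>
      D1 b ω + (D2 b true ω * D1 b ω + D2 b false ω * (1 - D1 b ω))
        - D1 b ω * (D2 b true ω * D1 b ω + D2 b false ω * (1 - D1 b ω))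
        - (D2 b true ω * D1 b ω + D2 b false ω * (1 - D1 b ω))) μ := fun b => by
    refine Integrable.of_bound (Measurable.aestronglyMeasurable (by fun_prop)) 1
      (ae_of_all _ fun ω => ?_)
    rcases hD101 b ω with h | h <;> rcases hD201 b true ω with h' | h' <;>
      rcases hD201 b false ω with h'' | h'' <;> simp [h, h', h'']
  have b3 : ∀ b, Integrable (fun ω =>
      D1 b ω * (D2 b true ω * D1 b ω + D2 b false ω * (1 - D1 b ω))
        - (D2 b true ω * D1 b ω + D2 b false ω * (1 - D1 b ω))) μ := fun b => by
    refine Integrable.of_bound (Measurable.aestronglyMeasurable (by fun_prop)) 1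
      (ae_of_all _ fun ω => ?_)
    rcases hD101 b ω with h | h <;> rcases hD201 b true ω with h' | h' <;>
      rcases hD201 b false ω with h'' | h'' <;> simp [h, h', h'']
  have b4 : ∀ b, Integrable (fun ω =>
      (1 - D1 b ω - (D2 b true ω * D1 b ω + D2 b false ω * (1 - D1 b ω))
        + 2 * D1 b ω * (D2 b true ω * D1 b ω + D2 b false ω * (1 - D1 b ω))) *
      (Yp b true true ω * D1 b ω * (D2 b true ω * D1 b ω + D2 b false ω * (1 - D1 b ω)) +
       Yp b false true ω * (1 - D1 b ω) * (D2 b true ω * D1 b ω + D2 b false ω * (1 - D1 b ω)) +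
       Yp b true false ω * D1 b ω * (1 - (D2 b true ω * D1 b ω + D2 b false ω * (1 - D1 b ω))) +
       Yp b false false ω * (1 - D1 b ω) *
        (1 - (D2 b true ω * D1 b ω + D2 b false ω * (1 - D1 b ω))))) μ := fun b => by
    refine Integrable.of_bound (Measurable.aestronglyMeasurable (by fun_prop)) (|Ymin| + |Ymax|) ?_
    filter_upwards [hbound b true true, hbound b false false] with ω ha hb
    have hc : ∀ y : ℝ, Ymin ≤ y ∧ y ≤ Ymax → |y| ≤ |Ymin| + |Ymax| := by
      intro y hy
      rw [abs_le]
      constructor <;> linarith [neg_abs_le Ymin, le_abs_self Ymax, abs_nonneg Ymin, abs_nonneg Ymax]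
    have hp : 0 ≤ |Ymin| + |Ymax| := by positivity
    rcases hD101 b ω with h | h <;> rcases hD201 b true ω with h' | h' <;>
      rcases hD201 b false ω with h'' | h'' <;> simp [h, h', h''] <;> norm_num <;>
      first | exact hp | exact hc _ ha | exact hc _ hb
  set C := CCev D1 D2 ∪ CNev D1 D2 ∪ CAev D1 D2 with hC
  have hCm : MeasurableSet C := by
    have q1 : Measurable (fun ω => D1 true ω - D1 false ω) := by fun_prop
    have q2 : Measurable (fun ω => D2 true true ω - D2 false false ω) := by fun_prop
    have s (f : Ω → ℝ) (hf : Measurable f) (c : ℝ) : MeasurableSet {ω | f ω = c} :=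
      hf (measurableSet_singleton c)
    refine MeasurableSet.union (MeasurableSet.union ?_ ?_) ?_
    · exact (s _ q1 1).inter (s _ q2 1)
    · exact (s _ q1 1).inter ((s _ (hD2meas _ _) 0).inter (s _ (hD2meas _ _) 0))
    · exact (s _ q1 1).inter ((s _ (hD2meas _ _) 1).inter (s _ (hD2meas _ _) 1))
  have hCind : ∀ᵐ ω ∂μ, (ω ∈ C ↔ D1 true ω - D1 false ω = 1) := by
    filter_upwards [hmono2, hdexcl true, hdexcl false] with ω h2 ht hf
    simp only [hC, CCev, CNev, CAev, Set.mem_union, Set.mem_setOf_eq]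
    constructor
    · tauto
    · intro h
      rcases hD101 true ω with a | a <;> rcases hD101 false ω with b | b <;>
        rcases hD201 true true ω with c | c <;> rcases hD201 false false ω with d | d <;>
        simp [a, b, c, d, hf, ht] at * <;> norm_num at *
  have hμC : (μ C).toReal = dE μ Z (obsD1 Z D1) := by
    rw [e1, ← integral_sub (b1 true) (b1 false)]
    have : ∫ ω, C.indicator (fun _ => (1 : ℝ)) ω ∂μ = (μ C).toReal := by
      rw [integral_indicator hCm]; simp [Measure.real]
    rw [← this]
    apply integral_congr_ae
    filter_upwards [hCind, hmono1] with ω h hm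
    by_cases hω : ω ∈ C
    · simp [hω, h.1 hω]
    · simp only [hω, false_iff] at h
      simp only [Set.indicator, hω, if_false]
      rcases hD101 true ω with a | a <;> rcases hD101 false ω with b | b <;>
        simp [a, b] at * <;> norm_num at *
  refine ⟨hμC, ?_⟩
  rw [hμC]
  refine div_le_div_of_nonneg_right ?_ hrel1.le
  rw [e2, e3, e4, ← integral_indicator hCm]
  refine aux_comb μ (b4 true) (b4 false) (b2 true) (b2 false) (b3 true) (b3 false)
    (((hYint true true true).sub (hYint true false false)).indicator hCm) Ymin Ymax ?_
  filter_upwards [hCind, hmono1, hmono2, hdexcl true, hdexcl false, hexcl true true,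
    hexcl false false, hbound true true true, hbound true false false] with
    ω hc h1 h2 ht hf xt xf yt yf
  by_cases hω : ω ∈ C
  · have hd := hc.1 hω
    have a : D1 true ω = 1 := by
      rcases hD101 true ω with a | a <;> rcases hD101 false ω with b | b <;> linarith
    have b : D1 false ω = 0 := by linarith
    simp only [Set.indicator, hω, if_true, Pi.sub_apply, Pi.add_apply, a, b, ← ht, ← hf, ← xt, ← xf]
    rw [a, b, ← hf] at h2
    rcases hD201 true true ω with c | c <;> rcases hD201 true false ω with d | d <;>
        rw [c, d] at h2 <;> simp only [c, d] <;> linarith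
  · have hd : ¬ _ := fun h => hω (hc.2 h)
    have e : D1 true ω = D1 false ω := by
      rcases hD101 true ω with a | a <;> rcases hD101 false ω with b | b
      · rw [a, b]
      · linarith
      · exact absurd (by rw [a, b]; norm_num) hd
      · rw [a, b]
    simp only [Set.indicator, hω, if_false, Pi.sub_apply, Pi.add_apply, e, ← ht, ← hf, ← xt, ← xf]
    rcases hD101 false ω with b | b <;> rcases hD201 true true ω with c | c <;>
      rcases hD201 true false ω with d | d <;> simp only [b, c, d] <;> linarith
end
end

section
/- (Upper bound on the LAFTE under bounded response) Under Independence, Relevance, Monotonicity, the Double exclusion restriction, and the bounded response condition that for all d1,d2 ∈ {0,1} the potential outcome satisfies Ymin ≤ Y(d1,d2) ≤ Ymax almost surely (for real constants Ymin ≤ Ymax), it holds that E[Y(1,1)−Y(0,0) | C] ≤ [ΔE[(1−D1−D2+2·D1·D2)·Y|Z] + Ymax·ΔE[D∨−D2|Z] − Ymin·ΔE[D∧−D2|Z]] / ΔE[D1|Z], where C := {C1,C2} ∪ {C1,N2} ∪ {C1,A2} satisfies μ(C) = ΔE[D1|Z] > 0. (Corollary 3, upper bound) -/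
open MeasureTheory ProbabilityTheory

noncomputable section

variable {Ω : Type*} [MeasurableSpace Ω]

/-- The space of all potential variables. -/
abbrev PotE : Type := (Bool → ℝ) × (Bool → Bool → ℝ) × (Bool → Bool → Bool → ℝ)

def eD1 (b : Bool) (e : PotE) : ℝ := e.1 b
def eD2 (b b' : Bool) (e : PotE) : ℝ := e.2.1 b b'
def eY (z d1 d2 : Bool) (e : PotE) : ℝ := e.2.2 z d1 d2

lemma meas_eD1 (b : Bool) : Measurable (eD1 b) := by unfold eD1; fun_prop
lemma meas_eD2 (b b' : Bool) : Measurable (eD2 b b') := by unfold eD2; fun_prop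
lemma meas_eY (z d1 d2 : Bool) : Measurable (eY z d1 d2) := by unfold eY; fun_prop

lemma meas_fD1 (z : ℝ) : Measurable (obsD1 (fun _ => z) eD1) := by
  have := meas_eD1
  unfold obsD1; fun_prop
lemma meas_fD2 (z : ℝ) : Measurable (obsD2 (fun _ => z) eD1 eD2) := by
  have := meas_eD2
  have := meas_fD1 z
  unfold obsD2; fun_prop
lemma meas_fY (z : ℝ) : Measurable (obsY (fun _ => z) eD1 eD2 eY) := by
  have := meas_eY
  have := meas_fD1 z
  have := meas_fD2 z
  unfold obsY; fun_prop

lemma map_cond_eq {E : Type*} [MeasurableSpace E] (μ : Measure Ω) [IsProbabilityMeasure μ]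
    (Z : Ω → ℝ) (V : Ω → E) (hZ : Measurable Z) (hV : Measurable V) (h : IndepFun V Z μ)
    (z : ℝ) (hz : μ (Z ⁻¹' {z}) ≠ 0) :
    (μ[|Z ⁻¹' {z}]).map V = μ.map V := by
  ext t ht
  rw [Measure.map_apply hV ht, Measure.map_apply hV ht,
    cond_apply (hZ (measurableSet_singleton z)), Set.inter_comm,
    h.measure_inter_preimage_eq_mul _ _ ht (measurableSet_singleton z), mul_comm (μ (V ⁻¹' t)),
    ← mul_assoc, ENNReal.inv_mul_cancel hz (measure_ne_top _ _), one_mul]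

lemma dE_eq {E : Type*} [MeasurableSpace E] (μ : Measure Ω) [IsProbabilityMeasure μ]
    (Z : Ω → ℝ) (V : Ω → E) (hZ : Measurable Z) (hV : Measurable V) (h : IndepFun V Z μ)
    (h1 : μ (Z ⁻¹' {1}) ≠ 0) (h0 : μ (Z ⁻¹' {0}) ≠ 0)
    (A : Ω → ℝ) (F : ℝ → E → ℝ) (hF : ∀ z, Measurable (F z)) (hA : ∀ ω, A ω = F (Z ω) (V ω)) :
    dE μ Z A = (∫ ω, F 1 (V ω) ∂μ) - ∫ ω, F 0 (V ω) ∂μ := by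
  have key : ∀ z, μ (Z ⁻¹' {z}) ≠ 0 →
      ∫ ω, A ω ∂(μ[|Z ⁻¹' {z}]) = ∫ ω, F z (V ω) ∂μ := by
    intro z hz
    have e1 : ∫ ω, A ω ∂(μ[|Z ⁻¹' {z}]) = ∫ ω, F z (V ω) ∂(μ[|Z ⁻¹' {z}]) := by
      apply integral_congr_ae
      filter_upwards [ae_cond_mem (μ := μ) (hZ (measurableSet_singleton z))] with ω hω
      have : Z ω = z := hω
      rw [hA, this]
    rw [e1, ← integral_map (f := F z) hV.aemeasurable (hF z).aestronglyMeasurable,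
      map_cond_eq μ Z V hZ hV h z hz,
      integral_map hV.aemeasurable (hF z).aestronglyMeasurable]
  unfold dE
  rw [key 1 h1, key 0 h0]

theorem stmt_14
    (μ : Measure Ω) [IsProbabilityMeasure μ]
    (Z : Ω → ℝ) (D1 : Bool → Ω → ℝ) (D2 : Bool → Bool → Ω → ℝ)
    (Yp : Bool → Bool → Bool → Ω → ℝ)
    (hZmeas : Measurable Z)
    (hD1meas : ∀ b, Measurable (D1 b))
    (hD2meas : ∀ b b', Measurable (D2 b b'))
    (hYmeas : ∀ z d1 d2, Measurable (Yp z d1 d2))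
    (hYint : ∀ z d1 d2, Integrable (Yp z d1 d2) μ)
    (hZ01 : ∀ ω, Z ω = 0 ∨ Z ω = 1)
    (hZpos : 0 < μ (Z ⁻¹' {1})) (hZlt : μ (Z ⁻¹' {1}) < 1)
    (hD101 : ∀ b ω, D1 b ω = 0 ∨ D1 b ω = 1)
    (hD201 : ∀ b b' ω, D2 b b' ω = 0 ∨ D2 b b' ω = 1)
    (hindep : IndepFun
      (fun ω => ((fun b => D1 b ω), (fun b b' => D2 b b' ω), (fun z d1 d2 => Yp z d1 d2 ω))) Z μ)
    (hrel1 : 0 < dE μ Z (obsD1 Z D1))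
    (hrel2 : 0 < dE μ Z (obsD2 Z D1 D2))
    (hrelAnd : 0 < dE μ Z (obsDand Z D1 D2))
    (hrelOr : 0 < dE μ Z (obsDor Z D1 D2))
    (hmono1 : ∀ᵐ ω ∂μ, D1 false ω ≤ D1 true ω)
    (hmono2 : ∀ᵐ ω ∂μ,
      D2 false true ω * D1 false ω + D2 false false ω * (1 - D1 false ω) ≤
        D2 true true ω * D1 true ω + D2 true false ω * (1 - D1 true ω))
    (hexcl : ∀ d1 d2, ∀ᵐ ω ∂μ, Yp true d1 d2 ω = Yp false d1 d2 ω)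
    (hdexcl : ∀ d1, ∀ᵐ ω ∂μ, D2 true d1 ω = D2 false d1 ω)
    (Ymin Ymax : ℝ) (hYlohi : Ymin ≤ Ymax)
    (hbound : ∀ z d1 d2, ∀ᵐ ω ∂μ, Ymin ≤ Yp z d1 d2 ω ∧ Yp z d1 d2 ω ≤ Ymax) :
    (μ (CCev D1 D2 ∪ CNev D1 D2 ∪ CAev D1 D2)).toReal = dE μ Z (obsD1 Z D1) ∧
    (∫ ω in CCev D1 D2 ∪ CNev D1 D2 ∪ CAev D1 D2, (Yp true true true ω - Yp true false false ω) ∂μ) /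
        (μ (CCev D1 D2 ∪ CNev D1 D2 ∪ CAev D1 D2)).toReal ≤
      (dE μ Z (fun ω =>
        (1 - obsD1 Z D1 ω - obsD2 Z D1 D2 ω + 2 * obsD1 Z D1 ω * obsD2 Z D1 D2 ω) *
          obsY Z D1 D2 Yp ω) +
        Ymax * dE μ Z (fun ω => obsDor Z D1 D2 ω - obsD2 Z D1 D2 ω) -
        Ymin * dE μ Z (fun ω => obsDand Z D1 D2 ω - obsD2 Z D1 D2 ω)) / dE μ Z (obsD1 Z D1) := by
  classical
  set V : Ω → PotE := fun ω =>
    ((fun b => D1 b ω), (fun b b' => D2 b b' ω), (fun z d1 d2 => Yp z d1 d2 ω)) with hVdef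
  have hV : Measurable V := by
    refine Measurable.prodMk (measurable_pi_lambda _ hD1meas) (Measurable.prodMk
      (measurable_pi_lambda _ fun b => measurable_pi_lambda _ (hD2meas b))
      (measurable_pi_lambda _ fun b => measurable_pi_lambda _ fun c =>
        measurable_pi_lambda _ (hYmeas b c)))
  have h1 : μ (Z ⁻¹' {1}) ≠ 0 := hZpos.ne'
  have h0 : μ (Z ⁻¹' {0}) ≠ 0 := by
    intro h
    have hu : (Z ⁻¹' {1} ∪ Z ⁻¹' {0} : Set Ω) = Set.univ := by
      ext ω
      rcases hZ01 ω with h | h <;> simp [h]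
    have := measure_union_le (μ := μ) (Z ⁻¹' {1}) (Z ⁻¹' {0})
    rw [hu, h, measure_univ, add_zero] at this
    exact absurd hZlt (not_lt.mpr this)
  -- observed variables with the instrument set to z
  let p1 : ℝ → PotE → ℝ := fun z => obsD1 (fun _ => z) eD1
  let pA : ℝ → PotE → ℝ := fun z e =>
    (1 - obsD1 (fun _ => z) eD1 e - obsD2 (fun _ => z) eD1 eD2 e
      + 2 * obsD1 (fun _ => z) eD1 e * obsD2 (fun _ => z) eD1 eD2 e) *
      obsY (fun _ => z) eD1 eD2 eY e
  let pB : ℝ → PotE → ℝ := fun z e =>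
    obsDor (fun _ => z) eD1 eD2 e - obsD2 (fun _ => z) eD1 eD2 e
  let pC : ℝ → PotE → ℝ := fun z e =>
    obsDand (fun _ => z) eD1 eD2 e - obsD2 (fun _ => z) eD1 eD2 e
  have m1 : ∀ z, Measurable (p1 z) := meas_fD1
  have mA : ∀ z, Measurable (pA z) := by
    intro z
    have := meas_fD1 z
    have := meas_fD2 z
    have := meas_fY z
    fun_prop
  have mB : ∀ z, Measurable (pB z) := by
    intro z
    have := meas_fD1 z
    have := meas_fD2 z
    simp only [pB, obsDor]
    fun_prop
  have mC : ∀ z, Measurable (pC z) := by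
    intro z
    have := meas_fD1 z
    have := meas_fD2 z
    simp only [pC, obsDand]
    fun_prop
  rw [dE_eq μ Z V hZmeas hV hindep h1 h0 (obsD1 Z D1) p1 m1 (fun ω => rfl)] at hrel1 ⊢
  rw [dE_eq μ Z V hZmeas hV hindep h1 h0 (fun ω =>
        (1 - obsD1 Z D1 ω - obsD2 Z D1 D2 ω + 2 * obsD1 Z D1 ω * obsD2 Z D1 D2 ω) *
          obsY Z D1 D2 Yp ω) pA mA (fun ω => rfl),
    dE_eq μ Z V hZmeas hV hindep h1 h0
      (fun ω => obsDor Z D1 D2 ω - obsD2 Z D1 D2 ω) pB mB (fun ω => rfl),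
    dE_eq μ Z V hZmeas hV hindep h1 h0
      (fun ω => obsDand Z D1 D2 ω - obsD2 Z D1 D2 ω) pC mC (fun ω => rfl)]
  -- integrability
  have z01 : ∀ ω, ∀ z : ℝ, (z = 0 ∨ z = 1) →
      (p1 z (V ω) = 0 ∨ p1 z (V ω) = 1) ∧
      (obsD2 (fun _ => z) eD1 eD2 (V ω) = 0 ∨ obsD2 (fun _ => z) eD1 eD2 (V ω) = 1) := by
    intro ω z hz
    have a1 := hD101 true ω
    have a2 := hD101 false ω
    have b1 := hD201 true true ω
    have b2 := hD201 true false ω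
    have b3 := hD201 false true ω
    have b4 := hD201 false false ω
    have q1 : p1 z (V ω) = 0 ∨ p1 z (V ω) = 1 := by
      simp only [p1, obsD1, eD1, hVdef]
      rcases hz with rfl | rfl <;> simpa
    refine ⟨q1, ?_⟩
    change obsD1 (fun _ => z) eD1 (V ω) = 0 ∨ obsD1 (fun _ => z) eD1 (V ω) = 1 at q1
    unfold obsD2
    simp only [eD2, hVdef] at q1 ⊢
    rcases hz with rfl | rfl <;> rcases q1 with q | q <;> rw [q] <;> simpa
  have i1 : ∀ z : ℝ, (z = 0 ∨ z = 1) → Integrable (fun ω => p1 z (V ω)) μ := by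
    intro z hz
    refine Integrable.of_bound ((m1 z).comp hV).aestronglyMeasurable 1 (ae_of_all _ fun ω => ?_)
    rcases (z01 ω z hz).1 with h | h <;> simp [h]
  have iB : ∀ z : ℝ, (z = 0 ∨ z = 1) → Integrable (fun ω => pB z (V ω)) μ := by
    intro z hz
    refine Integrable.of_bound ((mB z).comp hV).aestronglyMeasurable 1 (ae_of_all _ fun ω => ?_)
    obtain ⟨h, h'⟩ := z01 ω z hz
    simp only [p1] at h
    rcases h with h | h <;> rcases h' with h' | h' <;> simp [pB, obsDor, h, h']
  have iC : ∀ z : ℝ, (z = 0 ∨ z = 1) → Integrable (fun ω => pC z (V ω)) μ := by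
    intro z hz
    refine Integrable.of_bound ((mC z).comp hV).aestronglyMeasurable 1 (ae_of_all _ fun ω => ?_)
    obtain ⟨h, h'⟩ := z01 ω z hz
    simp only [p1] at h
    rcases h with h | h <;> rcases h' with h' | h' <;> simp [pC, obsDand, h, h']
  have hbd : ∀ᵐ ω ∂μ, ∀ z d1 d2, Ymin ≤ Yp z d1 d2 ω ∧ Yp z d1 d2 ω ≤ Ymax := by
    simp only [ae_all_iff]; exact hbound
  have iA : ∀ z : ℝ, (z = 0 ∨ z = 1) → Integrable (fun ω => pA z (V ω)) μ := by
    intro z hz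
    refine Integrable.of_bound ((mA z).comp hV).aestronglyMeasurable (|Ymin| + |Ymax|) ?_
    filter_upwards [hbd] with ω hω
    obtain ⟨h, h'⟩ := z01 ω z hz
    simp only [p1] at h
    have habs : ∀ z d1 d2, |eY z d1 d2 (V ω)| ≤ |Ymin| + |Ymax| := by
      intro z d1 d2
      change |Yp z d1 d2 ω| ≤ _
      obtain ⟨u, v⟩ := hω z d1 d2
      rw [abs_le]
      constructor
      · linarith [neg_abs_le Ymin, abs_nonneg Ymax]
      · linarith [le_abs_self Ymax, abs_nonneg Ymin]
    have hp : 0 ≤ |Ymin| + |Ymax| := by positivity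
    rcases h with h | h <;> rcases h' with h' | h' <;> rcases hz with rfl | rfl <;>
      norm_num [pA, obsY, h, h', hp, habs]
  set C : Set Ω := CCev D1 D2 ∪ CNev D1 D2 ∪ CAev D1 D2 with hC
  have hCmeas : MeasurableSet C := by
    have t1 := hD1meas true
    have t2 := hD1meas false
    have t3 := hD2meas true true
    have t4 := hD2meas false false
    have c1 : MeasurableSet {ω | D1 true ω - D1 false ω = 1} :=
      (t1.sub t2) (measurableSet_singleton 1)
    have c2 : MeasurableSet {ω | D2 true true ω - D2 false false ω = 1} :=
      (t3.sub t4) (measurableSet_singleton 1)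
    have c3 : ∀ r, MeasurableSet {ω | D2 true true ω = r} := fun r => t3 (measurableSet_singleton r)
    have c4 : ∀ r, MeasurableSet {ω | D2 false false ω = r} :=
      fun r => t4 (measurableSet_singleton r)
    exact ((c1.inter c2).union (c1.inter ((c3 0).inter (c4 0)))).union
      (c1.inter ((c3 1).inter (c4 1)))
  have one := Or.inr (a := (1 : ℝ) = 0) (Eq.refl (1 : ℝ))
  have zer := Or.inl (b := (0 : ℝ) = 1) (Eq.refl (0 : ℝ))
  have hx : ∀ᵐ ω ∂μ, ∀ d1 d2, Yp true d1 d2 ω = Yp false d1 d2 ω := by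
    simp only [ae_all_iff]; exact hexcl
  have hdx : ∀ᵐ ω ∂μ, ∀ d1, D2 true d1 ω = D2 false d1 ω := by
    simp only [ae_all_iff]; exact hdexcl
  -- membership in C
  have hCmem : ∀ᵐ ω ∂μ, (ω ∈ C ↔ D1 true ω = 1 ∧ D1 false ω = 0) := by
    filter_upwards [hmono1, hmono2, hdx] with ω g1 g2 g3
    have b3 := hD201 false true ω
    have b4 := hD201 false false ω
    simp only [hC, CCev, CNev, CAev, Set.mem_union, Set.mem_ofPred_eq]
    simp only [g3] at g2 ⊢
    rcases hD101 true ω with a1 | a1 <;> rcases hD101 false ω with a2 | a2 <;>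
      rcases b3 with b3 | b3 <;> rcases b4 with b4 | b4 <;>
      simp only [a1, a2, b3, b4] at g1 g2 ⊢ <;> (try norm_num at g1) <;>
      (try norm_num at g2) <;> (try norm_num)
  have hmass : (μ C).toReal = (∫ ω, p1 1 (V ω) ∂μ) - ∫ ω, p1 0 (V ω) ∂μ := by
    rw [← integral_sub (i1 1 one) (i1 0 zer)]
    have : (μ C).toReal = ∫ ω, C.indicator (fun _ => (1 : ℝ)) ω ∂μ := by
      rw [integral_indicator hCmeas]; simp [Measure.real]
    rw [this]
    apply integral_congr_ae
    filter_upwards [hCmem, hmono1] with ω hω g1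
    by_cases hm : ω ∈ C
    · obtain ⟨u, v⟩ := hω.1 hm
      simp [hm, p1, obsD1, eD1, hVdef, u, v]
    · have hn : ¬ (D1 true ω = 1 ∧ D1 false ω = 0) := fun h => hm (hω.2 h)
      rw [Set.indicator_of_notMem hm]
      rcases hD101 true ω with a1 | a1 <;> rcases hD101 false ω with a2 | a2 <;>
        simp only [p1, obsD1, eD1, hVdef, a1, a2] at g1 hn ⊢ <;> (try norm_num at g1) <;>
      (try norm_num at hn) <;> (try norm_num)
  refine ⟨hmass, ?_⟩
  rw [hmass]
  refine div_le_div_of_nonneg_right ?_ hrel1.le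
  rw [← integral_indicator hCmeas, ← integral_sub (iA 1 one) (iA 0 zer),
    ← integral_sub (iB 1 one) (iB 0 zer), ← integral_sub (iC 1 one) (iC 0 zer),
    ← integral_const_mul, ← integral_const_mul]
  have jA := (iA 1 one).sub (iA 0 zer)
  have jB := ((iB 1 one).sub (iB 0 zer)).const_mul Ymax
  have jC := ((iC 1 one).sub (iC 0 zer)).const_mul Ymin
  refine le_of_le_of_eq (integral_mono_ae
    (((hYint true true true).sub (hYint true false false)).indicator hCmeas)
    ((jA.add jB).sub jC) ?_) ?_
  · filter_upwards [hCmem, hmono1, hmono2, hdx, hx, hbd] with ω hω g1 g2 g3 g4 g5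
    have b3 := hD201 false true ω
    have b4 := hD201 false false ω
    have y1 := g5 false true true
    have y2 := g5 false true false
    have y3 := g5 false false true
    have y4 := g5 false false false
    simp only [Set.indicator_apply, hω, Pi.sub_apply, Pi.add_apply, pA, pB, pC, obsY, obsDor,
      obsDand, obsD2, obsD1, eD1, eD2, eY, hVdef, g4]
    simp only [g3] at g2 ⊢
    rcases hD101 true ω with a1 | a1 <;> rcases hD101 false ω with a2 | a2 <;>
      rcases b3 with b3 | b3 <;> rcases b4 with b4 | b4 <;>
      simp only [a1, a2, b3, b4] at g1 g2 ⊢ <;> (try norm_num at g1) <;>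
      (try norm_num at g2) <;> (try norm_num) <;> linarith
  · have e1 := integral_sub (jA.add jB) jC
    have e2 := integral_add jA jB
    simp only [Pi.sub_apply, Pi.add_apply] at e1 e2 ⊢
    rw [e1, e2]
end
end

section
/- (Necessary condition, no movers, first difference) Under the IV assumptions (Independence, Relevance, Monotonicity, Exclusion), it holds that ΔE[D∨ − D2 | Z] = μ({C1,N2}) − μ({A1,C2}); in particular this quantity equals zero whenever μ({C1,N2}) = μ({A1,C2}). (Proposition 2, eq. (9)) -/
open MeasureTheory ProbabilityTheory

noncomputable section

variable {Ω : Type*} [MeasurableSpace Ω]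

lemma cond_integral_aux (μ : Measure Ω) [IsProbabilityMeasure μ] (Z U A : Ω → ℝ) (z : ℝ)
    (hZ : Measurable Z) (hU : Measurable U) (hind : IndepFun U Z μ)
    (hpos : μ (Z ⁻¹' {z}) ≠ 0) (hA : ∀ ω, Z ω = z → A ω = U ω) :
    ∫ ω, A ω ∂(μ[|Z ⁻¹' {z}]) = ∫ ω, U ω ∂μ := by
  have hs : MeasurableSet (Z ⁻¹' {z}) := hZ (measurableSet_singleton z)
  have hpos' : (μ (Z ⁻¹' {z})).toReal ≠ 0 :=
    ENNReal.toReal_ne_zero.2 ⟨hpos, measure_ne_top _ _⟩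
  have h1 : ∫ ω in Z ⁻¹' {z}, A ω ∂μ = ∫ ω in Z ⁻¹' {z}, U ω ∂μ :=
    setIntegral_congr_fun hs (fun ω hω => hA ω hω)
  have hm : Measurable (Set.indicator ({z} : Set ℝ) (fun _ => (1 : ℝ))) :=
    measurable_const.indicator (measurableSet_singleton z)
  have h2 := (hind.comp (φ := id) measurable_id hm).integral_mul_eq_mul_integral
    hU.aestronglyMeasurable (hm.comp hZ).aestronglyMeasurable
  have h3 : ∫ ω in Z ⁻¹' {z}, U ω ∂μ = (∫ ω, U ω ∂μ) * (μ (Z ⁻¹' {z})).toReal := by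
    rw [← integral_indicator hs]
    have h4 : ∫ ω, (Set.indicator ({z} : Set ℝ) (fun _ => (1 : ℝ)) ∘ Z) ω ∂μ
        = (μ (Z ⁻¹' {z})).toReal := by
      have : (Set.indicator ({z} : Set ℝ) (fun _ => (1 : ℝ)) ∘ Z)
          = (Z ⁻¹' {z}).indicator (fun _ => (1 : ℝ)) := by
        ext ω
        by_cases h : Z ω = z <;> simp [h]
      rw [this, integral_indicator hs]
      simp [Measure.real]
    rw [h4] at h2
    rw [show (∫ ω, U ω ∂μ) = ∫ ω, (id ∘ U) ω ∂μ from rfl, ← h2]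
    congr 1
    ext ω
    by_cases h : Z ω = z <;> simp [h]
  rw [ProbabilityTheory.cond, integral_smul_measure, h1, h3, ENNReal.toReal_inv, smul_eq_mul]
  field_simp

theorem stmt_15
    (μ : Measure Ω) [IsProbabilityMeasure μ]
    (Z : Ω → ℝ) (D1 : Bool → Ω → ℝ) (D2 : Bool → Bool → Ω → ℝ)
    (Yp : Bool → Bool → Bool → Ω → ℝ)
    (hZmeas : Measurable Z)
    (hD1meas : ∀ b, Measurable (D1 b))
    (hD2meas : ∀ b b', Measurable (D2 b b'))
    (hYmeas : ∀ z d1 d2, Measurable (Yp z d1 d2))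
    (hYint : ∀ z d1 d2, Integrable (Yp z d1 d2) μ)
    (hZ01 : ∀ ω, Z ω = 0 ∨ Z ω = 1)
    (hZpos : 0 < μ (Z ⁻¹' {1})) (hZlt : μ (Z ⁻¹' {1}) < 1)
    (hD101 : ∀ b ω, D1 b ω = 0 ∨ D1 b ω = 1)
    (hD201 : ∀ b b' ω, D2 b b' ω = 0 ∨ D2 b b' ω = 1)
    (hindep : IndepFun
      (fun ω => ((fun b => D1 b ω), (fun b b' => D2 b b' ω), (fun z d1 d2 => Yp z d1 d2 ω))) Z μ)
    (hrel1 : 0 < dE μ Z (obsD1 Z D1))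
    (hrel2 : 0 < dE μ Z (obsD2 Z D1 D2))
    (hrelAnd : 0 < dE μ Z (obsDand Z D1 D2))
    (hrelOr : 0 < dE μ Z (obsDor Z D1 D2))
    (hmono1 : ∀ᵐ ω ∂μ, D1 false ω ≤ D1 true ω)
    (hmono2 : ∀ᵐ ω ∂μ,
      D2 false true ω * D1 false ω + D2 false false ω * (1 - D1 false ω) ≤
        D2 true true ω * D1 true ω + D2 true false ω * (1 - D1 true ω))
    (hexcl : ∀ d1 d2, ∀ᵐ ω ∂μ, Yp true d1 d2 ω = Yp false d1 d2 ω) :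
    dE μ Z (fun ω => obsDor Z D1 D2 ω - obsD2 Z D1 D2 ω) =
      (μ (CNev D1 D2)).toReal - (μ (ACev D1 D2)).toReal ∧
    (μ (CNev D1 D2) = μ (ACev D1 D2) →
      dE μ Z (fun ω => obsDor Z D1 D2 ω - obsD2 Z D1 D2 ω) = 0) := by
  have key : dE μ Z (fun ω => obsDor Z D1 D2 ω - obsD2 Z D1 D2 ω) =
      (μ (CNev D1 D2)).toReal - (μ (ACev D1 D2)).toReal := by
    have hZ0 : μ (Z ⁻¹' {0}) ≠ 0 := by
      have hc : Z ⁻¹' {0} = (Z ⁻¹' {1})ᶜ := by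
        ext ω
        rcases hZ01 ω with h | h <;> simp [h]
      rw [hc]
      intro h
      rw [prob_compl_eq_zero_iff (hZmeas (measurableSet_singleton 1))] at h
      exact hZlt.ne h
    have hU : ∀ b, Measurable (fun ω => D1 b ω * (1 - D2 b true ω)) := fun b =>
      (hD1meas b).mul (measurable_const.sub (hD2meas b true))
    have hI : ∀ b, IndepFun (fun ω => D1 b ω * (1 - D2 b true ω)) Z μ := by
      intro b
      have hg : Measurable (fun p : (Bool → ℝ) × (Bool → Bool → ℝ) ×
          (Bool → Bool → Bool → ℝ) => p.1 b * (1 - p.2.1 b true)) := by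
        fun_prop
      exact hindep.comp hg measurable_id
    have hint : ∀ b, Integrable (fun ω => D1 b ω * (1 - D2 b true ω)) μ := by
      intro b
      refine Integrable.of_bound (hU b).aestronglyMeasurable 1 (Filter.Eventually.of_forall ?_)
      intro ω
      rcases hD101 b ω with h | h <;> rcases hD201 b true ω with h' | h' <;> simp [h, h']
    have hCN : MeasurableSet (CNev D1 D2) :=
      (measurableSet_eq_fun ((hD1meas true).sub (hD1meas false)) measurable_const).inter
        ((measurableSet_eq_fun (hD2meas true true) measurable_const).inter
          (measurableSet_eq_fun (hD2meas false false) measurable_const))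
    have hAC : MeasurableSet (ACev D1 D2) :=
      (measurableSet_eq_fun (hD1meas true) measurable_const).inter
        ((measurableSet_eq_fun (hD1meas false) measurable_const).inter
          (measurableSet_eq_fun ((hD2meas true true).sub (hD2meas false true))
            measurable_const))
    unfold dE
    rw [cond_integral_aux μ Z (fun ω => D1 true ω * (1 - D2 true true ω)) _ 1 hZmeas
        (hU true) (hI true) hZpos.ne' ?_,
      cond_integral_aux μ Z (fun ω => D1 false ω * (1 - D2 false true ω)) _ 0 hZmeas
        (hU false) (hI false) hZ0 ?_]
    · rw [← integral_sub (hint true) (hint false)]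
      have e1 : (μ (CNev D1 D2)).toReal = ∫ ω, (CNev D1 D2).indicator (fun _ => (1 : ℝ)) ω ∂μ := by
        rw [integral_indicator hCN]
        simp [Measure.real]
      have e2 : (μ (ACev D1 D2)).toReal = ∫ ω, (ACev D1 D2).indicator (fun _ => (1 : ℝ)) ω ∂μ := by
        rw [integral_indicator hAC]
        simp [Measure.real]
      rw [e1, e2, ← integral_sub ((integrable_const 1).indicator hCN)
        ((integrable_const 1).indicator hAC)]
      refine integral_congr_ae ?_
      filter_upwards [hmono1, hmono2] with ω h1 h2
      simp only [Set.indicator, CNev, ACev, Set.mem_ofPred_eq]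
      rcases hD101 true ω with a | a <;> rcases hD101 false ω with b | b <;>
      rcases hD201 true true ω with c | c <;> rcases hD201 false true ω with d | d <;>
      rcases hD201 false false ω with e | e <;>
      rw [a, b] at h1 <;> rw [a, b, c, d, e] at h2 <;> simp only [a, b, c, d, e] <;>
      first | (exfalso; linarith) | norm_num
    · intro ω h
      simp only [obsDor, obsD2, obsD1, h]
      rcases hD101 false ω with b | b <;> rw [b] <;> ring
    · intro ω h
      simp only [obsDor, obsD2, obsD1, h]
      rcases hD101 true ω with b | b <;> rw [b] <;> ring
  refine ⟨key, fun h => ?_⟩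
  rw [key, h, sub_self]
end
end

section
/- (Necessary condition, no movers, second difference) Under the IV assumptions (Independence, Relevance, Monotonicity, Exclusion), it holds that ΔE[D∧ − D2 | Z] = μ({C1,A2}) − μ({N1,C2}); in particular this quantity equals zero whenever μ({C1,A2}) = μ({N1,C2}). (Proposition 2, eq. (10)) -/
open MeasureTheory ProbabilityTheory

noncomputable section

variable {Ω : Type*} [MeasurableSpace Ω]

/-- Conditioning on an event of the instrument does not change the mean of a variable that is
independent of the instrument. -/
theorem integral_cond_of_indep (μ : Measure Ω) [IsProbabilityMeasure μ] (W Z : Ω → ℝ)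
    (hW : Measurable W) (hZ : Measurable Z) (h : IndepFun W Z μ) (s : Set ℝ)
    (hs : MeasurableSet s) (h0 : μ (Z ⁻¹' s) ≠ 0) :
    ∫ ω, W ω ∂(μ[|Z ⁻¹' s]) = ∫ ω, W ω ∂μ := by
  have hmap : Measure.map W (μ[|Z ⁻¹' s]) = Measure.map W μ := by
    ext A hA
    rw [Measure.map_apply hW hA, Measure.map_apply hW hA, cond_apply (hZ hs), Set.inter_comm,
      h.measure_inter_preimage_eq_mul _ _ hA hs, mul_comm (μ (W ⁻¹' A)), ← mul_assoc,
      ENNReal.inv_mul_cancel h0 (measure_ne_top _ _), one_mul]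
  have e1 := integral_map (μ := μ[|Z ⁻¹' s]) hW.aemeasurable
    (measurable_id (α := ℝ)).aestronglyMeasurable
  have e2 := integral_map (μ := μ) hW.aemeasurable
    (measurable_id (α := ℝ)).aestronglyMeasurable
  rw [hmap] at e1
  simpa using e1.symm.trans e2

theorem stmt_16
    (μ : Measure Ω) [IsProbabilityMeasure μ]
    (Z : Ω → ℝ) (D1 : Bool → Ω → ℝ) (D2 : Bool → Bool → Ω → ℝ)
    (Yp : Bool → Bool → Bool → Ω → ℝ)
    (hZmeas : Measurable Z)
    (hD1meas : ∀ b, Measurable (D1 b))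
    (hD2meas : ∀ b b', Measurable (D2 b b'))
    (hYmeas : ∀ z d1 d2, Measurable (Yp z d1 d2))
    (hYint : ∀ z d1 d2, Integrable (Yp z d1 d2) μ)
    (hZ01 : ∀ ω, Z ω = 0 ∨ Z ω = 1)
    (hZpos : 0 < μ (Z ⁻¹' {1})) (hZlt : μ (Z ⁻¹' {1}) < 1)
    (hD101 : ∀ b ω, D1 b ω = 0 ∨ D1 b ω = 1)
    (hD201 : ∀ b b' ω, D2 b b' ω = 0 ∨ D2 b b' ω = 1)
    (hindep : IndepFun
      (fun ω => ((fun b => D1 b ω), (fun b b' => D2 b b' ω), (fun z d1 d2 => Yp z d1 d2 ω))) Z μ)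
    (hrel1 : 0 < dE μ Z (obsD1 Z D1))
    (hrel2 : 0 < dE μ Z (obsD2 Z D1 D2))
    (hrelAnd : 0 < dE μ Z (obsDand Z D1 D2))
    (hrelOr : 0 < dE μ Z (obsDor Z D1 D2))
    (hmono1 : ∀ᵐ ω ∂μ, D1 false ω ≤ D1 true ω)
    (hmono2 : ∀ᵐ ω ∂μ,
      D2 false true ω * D1 false ω + D2 false false ω * (1 - D1 false ω) ≤
        D2 true true ω * D1 true ω + D2 true false ω * (1 - D1 true ω))
    (hexcl : ∀ d1 d2, ∀ᵐ ω ∂μ, Yp true d1 d2 ω = Yp false d1 d2 ω) :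
    dE μ Z (fun ω => obsDand Z D1 D2 ω - obsD2 Z D1 D2 ω) =
      (μ (CAev D1 D2)).toReal - (μ (NCev D1 D2)).toReal ∧
    (μ (CAev D1 D2) = μ (NCev D1 D2) →
      dE μ Z (fun ω => obsDand Z D1 D2 ω - obsD2 Z D1 D2 ω) = 0) := by
  have key : dE μ Z (fun ω => obsDand Z D1 D2 ω - obsD2 Z D1 D2 ω) =
      (μ (CAev D1 D2)).toReal - (μ (NCev D1 D2)).toReal := by
    have m1 : MeasurableSet (Z ⁻¹' {1}) := hZmeas (measurableSet_singleton _)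
    have m0 : MeasurableSet (Z ⁻¹' {0}) := hZmeas (measurableSet_singleton _)
    have hpos0 : μ (Z ⁻¹' {0}) ≠ 0 := by
      have hc : Z ⁻¹' {0} = (Z ⁻¹' {1})ᶜ := by
        ext ω
        rcases hZ01 ω with h | h <;> simp [h]
      rw [hc, prob_compl_eq_one_sub m1]
      exact (tsub_pos_of_lt hZlt).ne'
    let W : Bool → Ω → ℝ := fun b ω => -((1 - D1 b ω) * D2 b false ω)
    have hWm : ∀ b, Measurable (W b) := fun b =>
      ((measurable_const.sub (hD1meas b)).mul (hD2meas b false)).neg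
    have hWi : ∀ b, Integrable (W b) μ := fun b => by
      refine Integrable.of_bound (hWm b).aestronglyMeasurable 1 (ae_of_all _ fun ω => ?_)
      rcases hD101 b ω with h | h <;> rcases hD201 b false ω with h' | h' <;> simp [W, h, h']
    have hWind : ∀ b, IndepFun (W b) Z μ := fun b => by
      have hφ : Measurable (fun p : (Bool → ℝ) × (Bool → Bool → ℝ) ×
          (Bool → Bool → Bool → ℝ) => -((1 - p.1 b) * p.2.1 b false)) := by
        fun_prop
      exact hindep.comp hφ measurable_id
    have i1 : ∫ ω, (obsDand Z D1 D2 ω - obsD2 Z D1 D2 ω) ∂(μ[|Z ⁻¹' {1}])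
        = ∫ ω, W true ω ∂μ := by
      rw [← integral_cond_of_indep μ (W true) Z (hWm _) hZmeas (hWind _) {1}
        (measurableSet_singleton _) hZpos.ne']
      apply integral_congr_ae
      filter_upwards [ae_cond_mem m1] with ω hω
      have hz : Z ω = 1 := hω
      rcases hD101 true ω with h | h <;> simp [obsDand, obsD2, obsD1, W, hz, h]
    have i0 : ∫ ω, (obsDand Z D1 D2 ω - obsD2 Z D1 D2 ω) ∂(μ[|Z ⁻¹' {0}])
        = ∫ ω, W false ω ∂μ := by
      rw [← integral_cond_of_indep μ (W false) Z (hWm _) hZmeas (hWind _) {0}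
        (measurableSet_singleton _) hpos0]
      apply integral_congr_ae
      filter_upwards [ae_cond_mem m0] with ω hω
      have hz : Z ω = 0 := hω
      rcases hD101 false ω with h | h <;> simp [obsDand, obsD2, obsD1, W, hz, h]
    have mCA : MeasurableSet (CAev D1 D2) :=
      (((hD1meas true).sub (hD1meas false)) (measurableSet_singleton 1)).inter
        ((hD2meas true true (measurableSet_singleton 1)).inter
          (hD2meas false false (measurableSet_singleton 1)))
    have mNC : MeasurableSet (NCev D1 D2) :=
      (hD1meas true (measurableSet_singleton 0)).inter
        ((hD1meas false (measurableSet_singleton 0)).inter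
          (((hD2meas true false).sub (hD2meas false false)) (measurableSet_singleton 1)))
    unfold dE
    rw [i1, i0, ← integral_sub (hWi _) (hWi _)]
    change _ = μ.real (CAev D1 D2) - μ.real (NCev D1 D2)
    rw [← integral_indicator_one mCA, ← integral_indicator_one mNC,
      ← integral_sub ((integrable_const 1).indicator mCA) ((integrable_const 1).indicator mNC)]
    apply integral_congr_ae
    filter_upwards [hmono1, hmono2] with ω h1 h2
    classical
    rcases hD101 true ω with a | a <;> rcases hD101 false ω with b | b <;>
      rcases hD201 true true ω with c | c <;> rcases hD201 true false ω with d | d <;>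
      rcases hD201 false false ω with e | e <;>
      simp only [a, b, c, d, e] at h1 h2 <;>
      simp [Set.indicator_apply, CAev, NCev, W, a, b, c, d, e] <;>
      first
        | done
        | (exfalso; norm_num at h1; done)
        | (exfalso; norm_num at h2; done)
        | norm_num
  refine ⟨key, fun h => ?_⟩
  rw [key, h, sub_self]
end
end

section
/- (Outcome-weighted necessary condition, first difference) Under the IV assumptions (Independence, Relevance, Monotonicity, Exclusion), it holds that ΔE[(D∨ − D2)·Y | Z] = E[Y(1,0); {C1,N2}] − E[Y(1,0); {A1,C2}]. Consequently, if μ({C1,N2}) = μ({A1,C2}) =: p1 > 0, then ΔE[(D∨ − D2)·Y | Z] = (E[Y(1,0) | {C1,N2}] − E[Y(1,0) | {A1,C2}])·p1, which is zero when p1 = 0 or when the two conditional expectations agree. (Proposition 2, eq. (11), from the appendix identity) -/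
open MeasureTheory ProbabilityTheory

noncomputable section

variable {Ω : Type*} [MeasurableSpace Ω]

theorem cond_integral_of_indep (μ : Measure Ω) [IsProbabilityMeasure μ]
    (Z f : Ω → ℝ) (hZ : Measurable Z) (hf : Measurable f) (h : IndepFun f Z μ) (z : ℝ)
    (hz : μ (Z ⁻¹' {z}) ≠ 0) : ∫ ω, f ω ∂(μ[|Z ⁻¹' {z}]) = ∫ ω, f ω ∂μ := by
  have hs : MeasurableSet (Z ⁻¹' {z}) := hZ (measurableSet_singleton z)
  have hg : Measurable (({z} : Set ℝ).indicator (fun _ => (1 : ℝ))) :=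
    measurable_const.indicator (measurableSet_singleton z)
  have h2 : IndepFun f (({z} : Set ℝ).indicator (fun _ => (1 : ℝ)) ∘ Z) μ :=
    h.comp measurable_id hg
  have h3 := h2.integral_mul_eq_mul_integral hf.aestronglyMeasurable
    (hg.comp hZ).aestronglyMeasurable
  have e1 : ∫ ω in Z ⁻¹' {z}, f ω ∂μ =
      ∫ ω, (f * (({z} : Set ℝ).indicator (fun _ => (1 : ℝ)) ∘ Z)) ω ∂μ := by
    rw [← integral_indicator hs]
    congr 1
    ext ω
    by_cases hω : Z ω = z <;> simp [Set.indicator, hω]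
  have e2 : ∫ ω, (({z} : Set ℝ).indicator (fun _ => (1 : ℝ)) ∘ Z) ω ∂μ
      = (μ (Z ⁻¹' {z})).toReal := by
    have : (({z} : Set ℝ).indicator (fun _ => (1 : ℝ)) ∘ Z)
        = (Z ⁻¹' {z}).indicator (fun _ => (1 : ℝ)) := by
      ext ω
      by_cases hω : Z ω = z <;> simp [Set.indicator, hω]
    rw [this, integral_indicator hs]
    simp [Measure.real]
  have hne : (μ (Z ⁻¹' {z})).toReal ≠ 0 :=
    ENNReal.toReal_ne_zero.mpr ⟨hz, measure_ne_top _ _⟩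
  rw [ProbabilityTheory.cond, integral_smul_measure, e1, h3, e2, ENNReal.toReal_inv, smul_eq_mul]
  field_simp

theorem stmt_17
    (μ : Measure Ω) [IsProbabilityMeasure μ]
    (Z : Ω → ℝ) (D1 : Bool → Ω → ℝ) (D2 : Bool → Bool → Ω → ℝ)
    (Yp : Bool → Bool → Bool → Ω → ℝ)
    (hZmeas : Measurable Z)
    (hD1meas : ∀ b, Measurable (D1 b))
    (hD2meas : ∀ b b', Measurable (D2 b b'))
    (hYmeas : ∀ z d1 d2, Measurable (Yp z d1 d2))
    (hYint : ∀ z d1 d2, Integrable (Yp z d1 d2) μ)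
    (hZ01 : ∀ ω, Z ω = 0 ∨ Z ω = 1)
    (hZpos : 0 < μ (Z ⁻¹' {1})) (hZlt : μ (Z ⁻¹' {1}) < 1)
    (hD101 : ∀ b ω, D1 b ω = 0 ∨ D1 b ω = 1)
    (hD201 : ∀ b b' ω, D2 b b' ω = 0 ∨ D2 b b' ω = 1)
    (hindep : IndepFun
      (fun ω => ((fun b => D1 b ω), (fun b b' => D2 b b' ω), (fun z d1 d2 => Yp z d1 d2 ω))) Z μ)
    (hrel1 : 0 < dE μ Z (obsD1 Z D1))
    (hrel2 : 0 < dE μ Z (obsD2 Z D1 D2))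
    (hrelAnd : 0 < dE μ Z (obsDand Z D1 D2))
    (hrelOr : 0 < dE μ Z (obsDor Z D1 D2))
    (hmono1 : ∀ᵐ ω ∂μ, D1 false ω ≤ D1 true ω)
    (hmono2 : ∀ᵐ ω ∂μ,
      D2 false true ω * D1 false ω + D2 false false ω * (1 - D1 false ω) ≤
        D2 true true ω * D1 true ω + D2 true false ω * (1 - D1 true ω))
    (hexcl : ∀ d1 d2, ∀ᵐ ω ∂μ, Yp true d1 d2 ω = Yp false d1 d2 ω) :
    dE μ Z (fun ω => (obsDor Z D1 D2 ω - obsD2 Z D1 D2 ω) * obsY Z D1 D2 Yp ω) =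
      (∫ ω in CNev D1 D2, Yp true true false ω ∂μ) -
        (∫ ω in ACev D1 D2, Yp true true false ω ∂μ) ∧
    (μ (CNev D1 D2) = μ (ACev D1 D2) → 0 < μ (CNev D1 D2) →
      dE μ Z (fun ω => (obsDor Z D1 D2 ω - obsD2 Z D1 D2 ω) * obsY Z D1 D2 Yp ω) =
        ((∫ ω in CNev D1 D2, Yp true true false ω ∂μ) / (μ (CNev D1 D2)).toReal -
          (∫ ω in ACev D1 D2, Yp true true false ω ∂μ) / (μ (ACev D1 D2)).toReal) *
          (μ (CNev D1 D2)).toReal) := by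
  have hmain : dE μ Z (fun ω => (obsDor Z D1 D2 ω - obsD2 Z D1 D2 ω) * obsY Z D1 D2 Yp ω) =
      (∫ ω in CNev D1 D2, Yp true true false ω ∂μ) -
        (∫ ω in ACev D1 D2, Yp true true false ω ∂μ) := by
    have key : ∀ b : Bool,
        Measurable (fun ω => D1 b ω * (1 - D2 b true ω) * Yp b true false ω) ∧
        Integrable (fun ω => D1 b ω * (1 - D2 b true ω) * Yp b true false ω) μ ∧
        IndepFun (fun ω => D1 b ω * (1 - D2 b true ω) * Yp b true false ω) Z μ := by
      intro b
      have hm : Measurable (fun ω => D1 b ω * (1 - D2 b true ω) * Yp b true false ω) :=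
        ((hD1meas b).mul (measurable_const.sub (hD2meas b true))).mul (hYmeas b true false)
      refine ⟨hm, ?_, ?_⟩
      · refine (hYint b true false).mono hm.aestronglyMeasurable (Filter.Eventually.of_forall ?_)
        intro ω
        rcases hD101 b ω with h | h <;> rcases hD201 b true ω with h' | h' <;> simp [h, h']
      · have hφ : Measurable (fun v : (Bool → ℝ) × (Bool → Bool → ℝ) × (Bool → Bool → Bool → ℝ) =>
            v.1 b * (1 - v.2.1 b true) * v.2.2 b true false) := by
          fun_prop
        exact hindep.comp hφ measurable_id
    have hs1 : MeasurableSet (Z ⁻¹' {1}) := hZmeas (measurableSet_singleton 1)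
    have hs0 : MeasurableSet (Z ⁻¹' {0}) := hZmeas (measurableSet_singleton 0)
    have hz0 : μ (Z ⁻¹' {0}) ≠ 0 := by
      intro h0
      have hc : Z ⁻¹' {0} = (Z ⁻¹' {1})ᶜ := by
        ext ω
        rcases hZ01 ω with h | h <;> simp [h]
      rw [hc, prob_compl_eq_zero_iff hs1] at h0
      exact hZlt.ne h0
    have c1 : ∫ ω, (obsDor Z D1 D2 ω - obsD2 Z D1 D2 ω) * obsY Z D1 D2 Yp ω ∂(μ[|Z ⁻¹' {1}])
        = ∫ ω, D1 true ω * (1 - D2 true true ω) * Yp true true false ω ∂μ := by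
      rw [← cond_integral_of_indep μ Z _ hZmeas (key true).1 (key true).2.2 1 hZpos.ne']
      apply integral_congr_ae
      filter_upwards [ae_cond_mem hs1] with ω hω
      have hω' : Z ω = 1 := hω
      rcases hD101 true ω with h | h <;> rcases hD201 true true ω with h' | h' <;>
        simp [obsDor, obsY, obsD2, obsD1, hω', h, h']
    have c0 : ∫ ω, (obsDor Z D1 D2 ω - obsD2 Z D1 D2 ω) * obsY Z D1 D2 Yp ω ∂(μ[|Z ⁻¹' {0}])
        = ∫ ω, D1 false ω * (1 - D2 false true ω) * Yp false true false ω ∂μ := by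
      rw [← cond_integral_of_indep μ Z _ hZmeas (key false).1 (key false).2.2 0 hz0]
      apply integral_congr_ae
      filter_upwards [ae_cond_mem hs0] with ω hω
      have hω' : Z ω = 0 := hω
      rcases hD101 false ω with h | h <;> rcases hD201 false true ω with h' | h' <;>
        simp [obsDor, obsY, obsD2, obsD1, hω', h, h']
    have hCN : MeasurableSet (CNev D1 D2) :=
      (measurableSet_eq_fun ((hD1meas true).sub (hD1meas false)) measurable_const).inter
        ((measurableSet_eq_fun (hD2meas true true) measurable_const).inter
          (measurableSet_eq_fun (hD2meas false false) measurable_const))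
    have hAC : MeasurableSet (ACev D1 D2) :=
      (measurableSet_eq_fun (hD1meas true) measurable_const).inter
        ((measurableSet_eq_fun (hD1meas false) measurable_const).inter
          (measurableSet_eq_fun ((hD2meas true true).sub (hD2meas false true)) measurable_const))
    unfold dE
    rw [c1, c0, ← integral_sub (key true).2.1 (key false).2.1, ← integral_indicator hCN,
      ← integral_indicator hAC, ← integral_sub ((hYint _ _ _).indicator hCN)
        ((hYint _ _ _).indicator hAC)]
    apply integral_congr_ae
    filter_upwards [hmono1, hmono2, hexcl true false] with ω h1 h2 h3
    simp only [Set.indicator, CNev, ACev, Set.mem_ofPred_eq, ← h3]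
    rcases hD101 true ω with a | a <;> rcases hD101 false ω with b | b <;>
      rcases hD201 true true ω with c | c <;> rcases hD201 false true ω with d | d <;>
      rcases hD201 false false ω with e | e <;>
      simp only [a, b, c, d, e] at h1 h2 ⊢ <;>
      first | (exfalso; linarith) | norm_num
  refine ⟨hmain, fun heq hpos => ?_⟩
  have hne : (μ (CNev D1 D2)).toReal ≠ 0 :=
    ENNReal.toReal_ne_zero.mpr ⟨hpos.ne', measure_ne_top _ _⟩
  rw [hmain, ← heq]
  field_simp
end
end

section
/- (Appendix identity for the multivalued first stage) Under the IV assumptions (Independence, Relevance, Monotonicity, Exclusion), the first stage of the multivalued treatment D1 + D2 satisfies ΔE[D1 + D2 | Z] = 2·μ({C1,C2}) + μ({C1,N2}) + μ({C1,A2}) + μ({N1,C2}) + μ({A1,C2}); in particular ΔE[D1 + D2 | Z] > 0. (identity used in the proof of Corollary 4) -/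
open MeasureTheory ProbabilityTheory

noncomputable section

variable {Ω : Type*} [MeasurableSpace Ω]

/-- Conditioning on `Z = z` does not change the mean of a variable independent of `Z`. -/
lemma cond_integral_eq (μ : Measure Ω) [IsProbabilityMeasure μ] (Z X : Ω → ℝ)
    (hZ : Measurable Z) (hX : Measurable X) (h : IndepFun X Z μ) (z : ℝ)
    (hz : μ (Z ⁻¹' {z}) ≠ 0) :
    ∫ ω, X ω ∂(μ[|Z ⁻¹' {z}]) = ∫ ω, X ω ∂μ := by
  have hs : MeasurableSet (Z ⁻¹' {z}) := hZ (measurableSet_singleton z)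
  have hind : IndepFun X (fun ω => Set.indicator {z} (fun _ => (1 : ℝ)) (Z ω)) μ :=
    h.comp (φ := id) (ψ := Set.indicator {z} (fun _ => (1 : ℝ))) measurable_id
      (measurable_const.indicator (measurableSet_singleton z))
  have hm : Measurable (fun ω => Set.indicator {z} (fun _ => (1 : ℝ)) (Z ω)) :=
    (measurable_const.indicator (measurableSet_singleton z)).comp hZ
  have key := hind.integral_fun_mul_eq_mul_integral hX.aestronglyMeasurable
    hm.aestronglyMeasurable
  have e1 : (fun ω => X ω * Set.indicator {z} (fun _ => (1 : ℝ)) (Z ω))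
      = (Z ⁻¹' {z}).indicator X := by
    funext ω
    by_cases hω : Z ω = z <;> simp [Set.indicator, hω]
  have e2 : (fun ω => Set.indicator {z} (fun _ => (1 : ℝ)) (Z ω))
      = (Z ⁻¹' {z}).indicator (fun _ => (1 : ℝ)) := by
    funext ω
    by_cases hω : Z ω = z <;> simp [Set.indicator, hω]
  rw [e1, e2, integral_indicator hs, integral_indicator hs] at key
  simp only [integral_const, smul_eq_mul, mul_one, measureReal_restrict_apply_univ] at key
  rw [ProbabilityTheory.cond, integral_smul_measure, key, smul_eq_mul, ENNReal.toReal_inv,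
    Measure.real]
  have : (μ (Z ⁻¹' {z})).toReal ≠ 0 := ENNReal.toReal_ne_zero.2 ⟨hz, measure_ne_top _ _⟩
  field_simp

theorem stmt_19
    (μ : Measure Ω) [IsProbabilityMeasure μ]
    (Z : Ω → ℝ) (D1 : Bool → Ω → ℝ) (D2 : Bool → Bool → Ω → ℝ)
    (Yp : Bool → Bool → Bool → Ω → ℝ)
    (hZmeas : Measurable Z)
    (hD1meas : ∀ b, Measurable (D1 b))
    (hD2meas : ∀ b b', Measurable (D2 b b'))
    (hYmeas : ∀ z d1 d2, Measurable (Yp z d1 d2))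
    (hYint : ∀ z d1 d2, Integrable (Yp z d1 d2) μ)
    (hZ01 : ∀ ω, Z ω = 0 ∨ Z ω = 1)
    (hZpos : 0 < μ (Z ⁻¹' {1})) (hZlt : μ (Z ⁻¹' {1}) < 1)
    (hD101 : ∀ b ω, D1 b ω = 0 ∨ D1 b ω = 1)
    (hD201 : ∀ b b' ω, D2 b b' ω = 0 ∨ D2 b b' ω = 1)
    (hindep : IndepFun
      (fun ω => ((fun b => D1 b ω), (fun b b' => D2 b b' ω), (fun z d1 d2 => Yp z d1 d2 ω))) Z μ)
    (hrel1 : 0 < dE μ Z (obsD1 Z D1))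
    (hrel2 : 0 < dE μ Z (obsD2 Z D1 D2))
    (hrelAnd : 0 < dE μ Z (obsDand Z D1 D2))
    (hrelOr : 0 < dE μ Z (obsDor Z D1 D2))
    (hmono1 : ∀ᵐ ω ∂μ, D1 false ω ≤ D1 true ω)
    (hmono2 : ∀ᵐ ω ∂μ,
      D2 false true ω * D1 false ω + D2 false false ω * (1 - D1 false ω) ≤
        D2 true true ω * D1 true ω + D2 true false ω * (1 - D1 true ω))
    (hexcl : ∀ d1 d2, ∀ᵐ ω ∂μ, Yp true d1 d2 ω = Yp false d1 d2 ω) :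
    dE μ Z (fun ω => obsD1 Z D1 ω + obsD2 Z D1 D2 ω) =
      2 * (μ (CCev D1 D2)).toReal + (μ (CNev D1 D2)).toReal + (μ (CAev D1 D2)).toReal +
        (μ (NCev D1 D2)).toReal + (μ (ACev D1 D2)).toReal ∧
    0 < dE μ Z (fun ω => obsD1 Z D1 ω + obsD2 Z D1 D2 ω) := by
  have hz1 : μ (Z ⁻¹' {1}) ≠ 0 := hZpos.ne'
  have hz0 : μ (Z ⁻¹' {0}) ≠ 0 := by
    intro h0
    have hae : ∀ᵐ ω ∂μ, ω ∈ Z ⁻¹' {1} := by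
      have : ∀ᵐ ω ∂μ, ω ∉ Z ⁻¹' {0} := measure_eq_zero_iff_ae_notMem.1 h0
      filter_upwards [this] with ω hω
      rcases hZ01 ω with h | h
      · exact absurd h hω
      · exact h
    have := (prob_compl_eq_zero_iff (hZmeas (measurableSet_singleton 1))).1 (mem_ae_iff.1 hae)
    exact hZlt.ne this
  have hp1 : IsProbabilityMeasure (μ[|Z ⁻¹' {1}]) := cond_isProbabilityMeasure hz1
  have hp0 : IsProbabilityMeasure (μ[|Z ⁻¹' {0}]) := cond_isProbabilityMeasure hz0
  have hbd : ∀ {x : ℝ}, x = 0 ∨ x = 1 → ‖x‖ ≤ 1 := by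
    rintro x (h | h) <;> simp [h]
  have hO1 : ∀ ω, obsD1 Z D1 ω = 0 ∨ obsD1 Z D1 ω = 1 := by
    intro ω
    rcases hZ01 ω with h | h
    · simpa [obsD1, h] using hD101 false ω
    · simpa [obsD1, h] using hD101 true ω
  have hO2 : ∀ ω, obsD2 Z D1 D2 ω = 0 ∨ obsD2 Z D1 D2 ω = 1 := by
    intro ω
    rcases hZ01 ω with h | h <;> rcases hO1 ω with h' | h' <;>
      simp only [obsD2, h, h'] <;> simpa using hD201 _ _ ω
  have mO1 : Measurable (obsD1 Z D1) := by
    have a := hD1meas true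
    have b := hD1meas false
    unfold obsD1
    fun_prop
  have mO2 : Measurable (obsD2 Z D1 D2) := by
    have a := hD2meas true true
    have b := hD2meas true false
    have c := hD2meas false true
    have d := hD2meas false false
    unfold obsD2
    fun_prop
  have iO1 : ∀ (ν : Measure Ω) [IsProbabilityMeasure ν], Integrable (obsD1 Z D1) ν := fun ν _ =>
    Integrable.of_bound mO1.aestronglyMeasurable 1 (.of_forall fun ω => hbd (hO1 ω))
  have iO2 : ∀ (ν : Measure Ω) [IsProbabilityMeasure ν], Integrable (obsD2 Z D1 D2) ν := fun ν _ =>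
    Integrable.of_bound mO2.aestronglyMeasurable 1 (.of_forall fun ω => hbd (hO2 ω))
  refine ⟨?_, ?_⟩
  swap
  · have : dE μ Z (fun ω => obsD1 Z D1 ω + obsD2 Z D1 D2 ω)
        = dE μ Z (obsD1 Z D1) + dE μ Z (obsD2 Z D1 D2) := by
      unfold dE
      rw [integral_add (iO1 _) (iO2 _), integral_add (iO1 _) (iO2 _)]
      ring
    rw [this]
    exact add_pos hrel1 hrel2
  -- potential total treatments
  let g : Bool → ((Bool → ℝ) × (Bool → Bool → ℝ) × (Bool → Bool → Bool → ℝ)) → ℝ :=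
    fun b p => p.1 b + (p.2.1 b true * p.1 b + p.2.1 b false * (1 - p.1 b))
  have hg : ∀ b, Measurable (g b) := by
    intro b
    simp only [g]
    fun_prop
  let T : Bool → Ω → ℝ := fun b ω =>
    D1 b ω + (D2 b true ω * D1 b ω + D2 b false ω * (1 - D1 b ω))
  have hTind : ∀ b, IndepFun (T b) Z μ := fun b => hindep.comp (hg b) measurable_id
  have hTm : ∀ b, Measurable (T b) := by
    intro b
    have a := hD1meas b
    have c := hD2meas b true
    have d := hD2meas b false
    simp only [T]
    fun_prop
  have hTi : ∀ b, Integrable (T b) μ := by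
    intro b
    refine Integrable.of_bound (hTm b).aestronglyMeasurable 2 (.of_forall fun ω => ?_)
    rcases hD101 b ω with h | h <;> rcases hD201 b true ω with h' | h' <;>
      rcases hD201 b false ω with h'' | h'' <;> simp only [T, h, h', h''] <;> norm_num
  have E1 : ∫ ω, (obsD1 Z D1 ω + obsD2 Z D1 D2 ω) ∂(μ[|Z ⁻¹' {1}]) = ∫ ω, T true ω ∂μ := by
    rw [← cond_integral_eq μ Z (T true) hZmeas (hTm _) (hTind _) 1 hz1]
    apply integral_congr_ae
    filter_upwards [ae_cond_mem (hZmeas (measurableSet_singleton 1))] with ω hω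
    have hω' : Z ω = 1 := hω
    simp [obsD1, obsD2, T, hω']
  have E0 : ∫ ω, (obsD1 Z D1 ω + obsD2 Z D1 D2 ω) ∂(μ[|Z ⁻¹' {0}]) = ∫ ω, T false ω ∂μ := by
    rw [← cond_integral_eq μ Z (T false) hZmeas (hTm _) (hTind _) 0 hz0]
    apply integral_congr_ae
    filter_upwards [ae_cond_mem (hZmeas (measurableSet_singleton 0))] with ω hω
    have hω' : Z ω = 0 := hω
    simp [obsD1, obsD2, T, hω']
  have m1 := hD1meas true
  have m0 := hD1meas false
  have m11 := hD2meas true true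
  have m10 := hD2meas true false
  have m01 := hD2meas false true
  have m00 := hD2meas false false
  have hc : ∀ {f : Ω → ℝ} (c : ℝ), Measurable f → MeasurableSet {ω | f ω = c} :=
    fun c hf => hf (measurableSet_singleton c)
  have sCC : MeasurableSet (CCev D1 D2) := (hc 1 (m1.sub m0)).inter (hc 1 (m11.sub m00))
  have sCN : MeasurableSet (CNev D1 D2) :=
    (hc 1 (m1.sub m0)).inter ((hc 0 m11).inter (hc 0 m00))
  have sCA : MeasurableSet (CAev D1 D2) :=
    (hc 1 (m1.sub m0)).inter ((hc 1 m11).inter (hc 1 m00))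
  have sNC : MeasurableSet (NCev D1 D2) :=
    (hc 0 m1).inter ((hc 0 m0).inter (hc 1 (m10.sub m00)))
  have sAC : MeasurableSet (ACev D1 D2) :=
    (hc 1 m1).inter ((hc 1 m0).inter (hc 1 (m11.sub m01)))
  have hI : ∀ {s : Set Ω}, MeasurableSet s → Integrable (s.indicator (1 : Ω → ℝ)) μ :=
    fun hs => (integrable_const (1 : ℝ)).indicator hs
  have hint : ∀ {s : Set Ω}, MeasurableSet s → (μ s).toReal = ∫ ω, s.indicator (1 : Ω → ℝ) ω ∂μ :=
    fun hs => (integral_indicator_one hs).symm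
  have hadd : ∀ {p q : Ω → ℝ}, Integrable p μ → Integrable q μ →
      Integrable (fun ω => p ω + q ω) μ := fun hp hq => hp.add hq
  have J1 := hadd ((hI sCC).const_mul 2) (hI sCN)
  have J2 := hadd J1 (hI sCA)
  have J3 := hadd J2 (hI sNC)
  unfold dE
  rw [E1, E0, ← integral_sub (hTi _) (hTi _), hint sCC, hint sCN, hint sCA, hint sNC, hint sAC,
    ← integral_const_mul, ← integral_add ((hI sCC).const_mul 2) (hI sCN),
    ← integral_add J1 (hI sCA), ← integral_add J2 (hI sNC), ← integral_add J3 (hI sAC)]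
  apply integral_congr_ae
  filter_upwards [hmono1, hmono2] with ω h1 h2
  simp only [T, Set.indicator, CCev, CNev, CAev, NCev, ACev, Set.mem_ofPred_eq, Pi.one_apply]
  rcases hD101 true ω with a | a <;> rcases hD101 false ω with b | b <;>
    rcases hD201 true true ω with c | c <;> rcases hD201 true false ω with d | d <;>
    rcases hD201 false true ω with e | e <;> rcases hD201 false false ω with f | f <;>
    simp only [a, b, c, d, e, f] at h1 h2 ⊢ <;>
    first | (exfalso; linarith) | (norm_num; done)
end
end
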